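/- Let V be a finite-dimensional real vector space, let a : V × V → ℝ be a symmetric positive definite bilinear form, let V_1, …, V_J be subspaces of V with V = V_1 + ⋯ + V_J, and let P = P_1 + ⋯ + P_J, where P_j is the a-orthogonal projection onto V_j. Then P is invertible and for every v ∈ V, a(P^{-1}v, v) = min{ Σ_{j=1}^J a(v_j, v_j) : v_j ∈ V_j for each j and v_1 + ⋯ + v_J = v }. -/

import Mathlib

/-!
Orthogonality gives `a w u = a (P_j w) u` for `u ∈ V_j`. Summing this over the components of a
decomposition `P w = Σ_j u_j` and completing the square yields the Pythagorean identity
`Σ_j a(u_j, u_j) = a(w, P w) + Σ_j a(u_j - P_j w, u_j - P_j w)`, so `u_j = P_j w` is the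
minimising decomposition, of energy `a(w, P w)`. In particular `P w = 0` forces every `P_j w` to
vanish, so `w` is `a`-orthogonal to all the `V_j`, hence to `V`, and is therefore zero; in finite
dimension the injective `P` is bijective.
-/

section OrthogonalProjection

variable {R M : Type*} [CommRing R] [AddCommGroup M] [Module R M] {a : LinearMap.BilinForm R M}

/-- `p` is the orthogonal projection onto `S` for the bilinear form `a`. The vector `v - p v` is
in the left argument of `a`, which matters when `a` is not symmetric. -/
structure IsOrthogonalProjection (a : LinearMap.BilinForm R M) (S : Submodule R M)
    (p : M →ₗ[R] M) : Prop where
  apply_mem : ∀ v, p v ∈ S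
  sub_apply_ortho : ∀ v, ∀ w ∈ S, a (v - p v) w = 0

theorem IsOrthogonalProjection.form_eq_form_projection {S : Submodule R M} {p : M →ₗ[R] M}
    (hp : IsOrthogonalProjection a S p) (w : M) {u : M} (hu : u ∈ S) : a w u = a (p w) u := by
  simpa only [map_sub, LinearMap.sub_apply, sub_eq_zero] using hp.sub_apply_ortho w u hu

variable {ι : Type*} {S : ι → Submodule R M} {p : ι → M →ₗ[R] M}

theorem form_eq_zero_of_forall_projection_eq_zero
    (hp : ∀ i, IsOrthogonalProjection a (S i) (p i)) (hS : ⨆ i, S i = ⊤) {w : M}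
    (hw : ∀ i, p i w = 0) : a w = 0 := by
  have hker : ⨆ i, S i ≤ LinearMap.ker (a w) := iSup_le fun i u hu => by
    rw [LinearMap.mem_ker, (hp i).form_eq_form_projection w hu, hw i, map_zero,
      LinearMap.zero_apply]
  exact LinearMap.ker_eq_top.mp (top_le_iff.mp (hS ▸ hker))

variable [Fintype ι]

theorem form_sum_eq_sum_form_projection (hp : ∀ i, IsOrthogonalProjection a (S i) (p i)) (w : M)
    {u : ι → M} (hu : ∀ i, u i ∈ S i) : a w (∑ i, u i) = ∑ i, a (p i w) (u i) := by
  rw [map_sum]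
  exact Finset.sum_congr rfl fun i _ => (hp i).form_eq_form_projection w (hu i)

theorem form_sum_projection_eq_sum_energy (hp : ∀ i, IsOrthogonalProjection a (S i) (p i))
    (w : M) : a w ((∑ i, p i) w) = ∑ i, a (p i w) (p i w) := by
  rw [LinearMap.sum_apply, form_sum_eq_sum_form_projection hp w fun i => (hp i).apply_mem w]

theorem sum_energy_eq_form_add_sum_energy_sub (ha : a.IsSymm)
    (hp : ∀ i, IsOrthogonalProjection a (S i) (p i)) {w : M} {u : ι → M} (hu : ∀ i, u i ∈ S i)
    (hsum : ∑ i, u i = (∑ i, p i) w) :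
    ∑ i, a (u i) (u i) =
      a w ((∑ i, p i) w) + ∑ i, a (u i - p i w) (u i - p i w) := by
  have hcross : ∑ i, a (p i w) (u i) = a w ((∑ i, p i) w) := by
    rw [← hsum, form_sum_eq_sum_form_projection hp w hu]
  have hsquare (i : ι) : a (u i - p i w) (u i - p i w) =
      a (u i) (u i) - 2 * a (p i w) (u i) + a (p i w) (p i w) := by
    simp only [map_sub, LinearMap.sub_apply, ha.eq (u i) (p i w)]
    ring
  simp only [hsquare, Finset.sum_add_distrib, Finset.sum_sub_distrib, ← Finset.mul_sum, hcross,
    ← form_sum_projection_eq_sum_energy hp]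
  ring

variable [PartialOrder R] [IsOrderedAddMonoid R]

theorem isLeast_sum_energy_decompositions (ha : a.IsPosSemidef)
    (hp : ∀ i, IsOrthogonalProjection a (S i) (p i)) (w : M) :
    IsLeast {s : R | ∃ u : ι → M,
        (∀ i, u i ∈ S i) ∧ ∑ i, u i = (∑ i, p i) w ∧ s = ∑ i, a (u i) (u i)}
      (a w ((∑ i, p i) w)) := by
  constructor
  · exact ⟨fun i => p i w, fun i => (hp i).apply_mem w, (LinearMap.sum_apply _ _ _).symm,
      form_sum_projection_eq_sum_energy hp w⟩
  · rintro _ ⟨u, hu, hsum, rfl⟩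
    rw [sum_energy_eq_form_add_sum_energy_sub ha.isSymm hp hu hsum]
    exact le_add_of_nonneg_right (Finset.sum_nonneg fun i _ => ha.nonneg _)

theorem injective_sum_projection (ha : a.toQuadraticMap.PosDef)
    (hp : ∀ i, IsOrthogonalProjection a (S i) (p i)) (hS : ⨆ i, S i = ⊤) :
    Function.Injective ⇑(∑ i, p i) := by
  refine (injective_iff_map_eq_zero _).mpr fun w hw => ?_
  have henergy : ∑ i, a (p i w) (p i w) = 0 := by
    rw [← form_sum_projection_eq_sum_energy hp, hw, map_zero]
  have hproj (i : ι) : p i w = 0 := ha.anisotropic _ <|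
    (Finset.sum_eq_zero_iff_of_nonneg fun j _ => ha.nonneg (p j w)).mp henergy i
      (Finset.mem_univ i)
  have hform : a w = 0 := form_eq_zero_of_forall_projection_eq_zero hp hS hproj
  exact ha.anisotropic w (LinearMap.congr_fun hform w)

end OrthogonalProjection

theorem stmt_9_general {R M ι : Type*} [CommRing R] [PartialOrder R] [IsOrderedAddMonoid R]
    [AddCommGroup M] [Module R M] [IsArtinian R M] [Fintype ι] {a : LinearMap.BilinForm R M}
    (hsymm : a.IsSymm) (hpos : a.toQuadraticMap.PosDef) {S : ι → Submodule R M}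
    (hS : ⨆ i, S i = ⊤) {p : ι → M →ₗ[R] M} (hp : ∀ i, IsOrthogonalProjection a (S i) (p i)) :
    Function.Bijective ⇑(∑ i, p i) ∧
    ∀ v w : M, (∑ i, p i) w = v →
      IsLeast {s : R | ∃ u : ι → M,
          (∀ i, u i ∈ S i) ∧ ∑ i, u i = v ∧ s = ∑ i, a (u i) (u i)}
        (a w v) := by
  refine ⟨IsArtinian.bijective_of_injective_endomorphism _ (injective_sum_projection hpos hp hS),
    ?_⟩
  rintro _ w rfl
  exact isLeast_sum_energy_decompositions ⟨hsymm, ⟨hpos.nonneg⟩⟩ hp w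

/-- Lions' lemma: the additive Schwarz operator `P = Σ_j P_j` (sum of the
`a`-orthogonal projections onto subspaces spanning `V`) is invertible, and for every
`v`, `a(P⁻¹v, v)` is the minimum of `Σ_j a(v_j, v_j)` over all decompositions
`v = Σ_j v_j` with `v_j ∈ V_j`. -/
theorem stmt_9
    {V : Type*} [AddCommGroup V] [Module ℝ V] [FiniteDimensional ℝ V]
    (a : V →ₗ[ℝ] V →ₗ[ℝ] ℝ)
    (hsymm : ∀ u v : V, a u v = a v u)
    (hpos : ∀ v : V, v ≠ 0 → 0 < a v v)
    (J : ℕ) (Vs : Fin J → Submodule ℝ V)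
    (hspan : (⨆ j, Vs j) = ⊤)
    (P : Fin J → (V →ₗ[ℝ] V))
    (hPmem : ∀ j (v : V), P j v ∈ Vs j)
    (hPortho : ∀ j (v : V), ∀ w ∈ Vs j, a (v - P j v) w = 0) :
    Function.Bijective (∑ j, P j) ∧
    ∀ v w : V, (∑ j, P j) w = v →
      IsLeast {s : ℝ | ∃ vs : Fin J → V,
          (∀ j, vs j ∈ Vs j) ∧ (∑ j, vs j = v) ∧ s = ∑ j, a (vs j) (vs j)}
        (a w v) := by
  simpa only [LinearMap.coe_sum] using
    stmt_9_general ⟨hsymm⟩ hpos hspan fun j => ⟨hPmem j, hPortho j⟩
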